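/- arXiv:1807.09000 — 2 statements merged into one kernel-verified Lean document; each statement's English description precedes it below -/
import Mathlib

section
/- Uncertainty never helps the speaker. Let u be an utterance, C a finset of objects, o^t ∈ C a target with ℒ u o^t = 1, P a hidden-object prior, and cost : 𝒰 → ℝ a cost function. Then U_asym(u) ≤ U_ego(u); that is, the expected log-probability of the target under uncertainty about a hidden object is at most its log-probability in the shared context. -/
open Finset Real

noncomputable section

/-- Literal listener: `L0 ℒ C u o = ℒ u o / ∑ o' ∈ C, ℒ u o'`. -/
def L0 {O 𝒰 : Type*} (ℒ : 𝒰 → O → ℝ) (C : Finset O) (u : 𝒰) (o : O) : ℝ :=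
  ℒ u o / ∑ o' ∈ C, ℒ u o'

/-- Egocentric utility. -/
def Uego {O 𝒰 : Type*} (ℒ : 𝒰 → O → ℝ) (C : Finset O) (oT : O) (cost : 𝒰 → ℝ) (u : 𝒰) : ℝ :=
  Real.log (L0 ℒ C u oT) - cost u

/-- Asymmetric (occlusion-sensitive) utility. -/
def Uasym {O 𝒰 : Type*} [DecidableEq O] [Fintype O] (ℒ : 𝒰 → O → ℝ) (C : Finset O) (oT : O)
    (P : O → ℝ) (cost : 𝒰 → ℝ) (u : 𝒰) : ℝ :=
  (∑ oh : O, P oh * Real.log (L0 ℒ (insert oh C) u oT)) - cost u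

section LiteralListener

variable {O 𝒰 : Type*} {ℒ : 𝒰 → O → ℝ} {u : 𝒰} {C D : Finset O} {o : O}

lemma sum_semantics_pos (hL : ∀ o', 0 ≤ ℒ u o') (hoC : o ∈ C) (ho : 0 < ℒ u o) :
    0 < ∑ o' ∈ C, ℒ u o' :=
  sum_pos' (fun o' _ ↦ hL o') ⟨o, hoC, ho⟩

lemma L0_pos (hL : ∀ o', 0 ≤ ℒ u o') (hoC : o ∈ C) (ho : 0 < ℒ u o) : 0 < L0 ℒ C u o :=
  div_pos ho (sum_semantics_pos hL hoC ho)

lemma L0_le_L0_of_subset (hL : ∀ o', 0 ≤ ℒ u o') (hC : 0 < ∑ o' ∈ C, ℒ u o') (hCD : C ⊆ D) :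
    L0 ℒ D u o ≤ L0 ℒ C u o :=
  div_le_div_of_nonneg_left (hL o) hC (sum_le_sum_of_subset_of_nonneg hCD fun o' _ _ ↦ hL o')

lemma log_L0_le_log_L0_of_subset (hL : ∀ o', 0 ≤ ℒ u o') (hoC : o ∈ C) (ho : 0 < ℒ u o)
    (hCD : C ⊆ D) : log (L0 ℒ D u o) ≤ log (L0 ℒ C u o) :=
  log_le_log (L0_pos hL (hCD hoC) ho) (L0_le_L0_of_subset hL (sum_semantics_pos hL hoC ho) hCD)

end LiteralListener

theorem Uasym_le_Uego_general
    {O 𝒰 : Type*} [DecidableEq O] [Fintype O]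
    (ℒ : 𝒰 → O → ℝ) (u : 𝒰) (hL : ∀ o, 0 ≤ ℒ u o)
    (C : Finset O) (oT : O) (hoT : oT ∈ C) (ht : 0 < ℒ u oT)
    (P : O → ℝ) (hP : ∀ o, 0 ≤ P o) (hPsum : ∑ o : O, P o = 1)
    (cost : 𝒰 → ℝ) :
    Uasym ℒ C oT P cost u ≤ Uego ℒ C oT cost u := by
  have log_le (oh : O) : log (L0 ℒ (insert oh C) u oT) ≤ log (L0 ℒ C u oT) :=
    log_L0_le_log_L0_of_subset hL hoT ht (subset_insert oh C)
  have expected_log_le :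
      ∑ oh : O, P oh * log (L0 ℒ (insert oh C) u oT) ≤ log (L0 ℒ C u oT) :=
    (convex_Iic (log (L0 ℒ C u oT))).sum_mem (fun oh _ ↦ hP oh) hPsum fun oh _ ↦ log_le oh
  exact sub_le_sub_right expected_log_le (cost u)

/-- Uncertainty never helps the speaker: `Uasym ≤ Uego`. -/
theorem Uasym_le_Uego
    {O 𝒰 : Type*} [DecidableEq O] [Fintype O]
    (ℒ : 𝒰 → O → ℝ) (hL : ∀ u o, ℒ u o = 0 ∨ ℒ u o = 1)
    (u : 𝒰) (C : Finset O) (oT : O) (hoT : oT ∈ C) (ht : ℒ u oT = 1)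
    (P : O → ℝ) (hP : ∀ o, 0 ≤ P o) (hPsum : ∑ o : O, P o = 1)
    (cost : 𝒰 → ℝ) :
    Uasym ℒ C oT P cost u ≤ Uego ℒ C oT cost u := by
  have semantics_nonneg (o : O) : 0 ≤ ℒ u o := by rcases hL u o with h | h <;> simp [h]
  exact Uasym_le_Uego_general ℒ u semantics_nonneg C oT hoT (ht ▸ one_pos) P hP hPsum cost

end
end

section
/- Corollary for a uniquely identifying description. Suppose E_{u₀} = {o^t} (utterance u₀ is true of the target o^t and of no other possible object), E_{u₀} ⊊ E_{u₁}, o^t ∈ C, ℒ u₁ o^t = 1, and P is a hidden-object prior for which there exists an object o* ∉ C with ℒ u₁ o* = 1 and P(o*) > 0. Then ∑_{o_h : O} P(o_h)·(log L₀(o^t | u₀, C ∪ {o_h}) − log L₀(o^t | u₁, C ∪ {o_h})) > log L₀(o^t | u₀, C) − log L₀(o^t | u₁, C); that is, relative to the egocentric utility, the asymmetric utility strictly favors a fully distinguishing description over a less specific one. -/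
open Finset Real

noncomputable section

/-!
Adding a hidden object `oh ∉ C` to the context divides the listener's probability of the target
under `u` by `1 + r u`, where `r u` is the weight `ℒ u oh` relative to the total weight of `C`. The
utility gap between `u₀` and `u₁` therefore grows by `log (1 + r u₁) - log (1 + r u₀)`, which is
nonnegative when `r u₀ ≤ r u₁`; averaging over the prior gives the theorem. If `u₀` is true of the
target alone, then `r u₀ = 0` for every hidden object.
-/

theorem lt_sum_mul_of_le_of_lt {ι R : Type*} [Semiring R] [PartialOrder R]
    [IsStrictOrderedRing R] {s : Finset ι} {w f : ι → R} {c : R}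
    (hw : ∀ i ∈ s, 0 ≤ w i) (hw_sum : ∑ i ∈ s, w i = 1) (hle : ∀ i ∈ s, c ≤ f i)
    (hlt : ∃ i ∈ s, 0 < w i ∧ c < f i) :
    c < ∑ i ∈ s, w i * f i := by
  obtain ⟨j, hj, hwj, hcj⟩ := hlt
  calc
    c = ∑ i ∈ s, w i * c := by rw [← sum_mul, hw_sum, one_mul]
    _ < ∑ i ∈ s, w i * f i :=
      sum_lt_sum (fun i hi ↦ mul_le_mul_of_nonneg_left (hle i hi) (hw i hi))
        ⟨j, hj, mul_lt_mul_of_pos_left hcj hwj⟩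

section Listener

variable {O 𝒰 : Type*} {ℒ : 𝒰 → O → ℝ} {C : Finset O} {u u₀ u₁ : 𝒰} {o oh oT : O}

theorem L0_nonneg (hu : 0 ≤ ℒ u) : 0 ≤ L0 ℒ C u o :=
  div_nonneg (hu o) (sum_nonneg fun o' _ ↦ hu o')

theorem sum_semantics_pos_s13 (hu : 0 ≤ ℒ u) (hoT : oT ∈ C) (huT : 0 < ℒ u oT) :
    0 < ∑ o' ∈ C, ℒ u o' :=
  sum_pos' (fun o' _ ↦ hu o') ⟨oT, hoT, huT⟩

theorem L0_pos_s13 (hu : 0 ≤ ℒ u) (hoT : oT ∈ C) (huT : 0 < ℒ u oT) (huo : 0 < ℒ u o) :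
    0 < L0 ℒ C u o :=
  div_pos huo (sum_semantics_pos_s13 hu hoT huT)

theorem L0_insert [DecidableEq O] (hoh : oh ∉ C) (hC : ∑ o' ∈ C, ℒ u o' ≠ 0) :
    L0 ℒ (insert oh C) u o = L0 ℒ C u o / (1 + L0 ℒ C u oh) := by
  simp only [L0]
  rw [sum_insert hoh, div_div, mul_one_add, mul_div_cancel₀ _ hC, add_comm]

theorem log_L0_insert [DecidableEq O] (hu : 0 ≤ ℒ u) (hoT : oT ∈ C) (huT : 0 < ℒ u oT)
    (hoh : oh ∉ C) :
    log (L0 ℒ (insert oh C) u oT) = log (L0 ℒ C u oT) - log (1 + L0 ℒ C u oh) := by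
  have hr : 0 ≤ L0 ℒ C u oh := L0_nonneg hu
  rw [L0_insert hoh (sum_semantics_pos_s13 hu hoT huT).ne',
    log_div (L0_pos_s13 hu hoT huT huT).ne' (by positivity)]

/-- The utility advantage of `u₀` over `u₁` for conveying `oT` in the context `C`, the utility of
an utterance being the literal listener's log-probability of the target. -/
def utilityGap (ℒ : 𝒰 → O → ℝ) (C : Finset O) (u₀ u₁ : 𝒰) (oT : O) : ℝ :=
  log (L0 ℒ C u₀ oT) - log (L0 ℒ C u₁ oT)

theorem utilityGap_insert [DecidableEq O] (h₀ : 0 ≤ ℒ u₀) (h₁ : 0 ≤ ℒ u₁) (hoT : oT ∈ C)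
    (h₀T : 0 < ℒ u₀ oT) (h₁T : 0 < ℒ u₁ oT) (hoh : oh ∉ C) :
    utilityGap ℒ (insert oh C) u₀ u₁ oT =
      utilityGap ℒ C u₀ u₁ oT + (log (1 + L0 ℒ C u₁ oh) - log (1 + L0 ℒ C u₀ oh)) := by
  simp only [utilityGap]
  rw [log_L0_insert h₀ hoT h₀T hoh, log_L0_insert h₁ hoT h₁T hoh]
  ring

theorem utilityGap_le_utilityGap_insert [DecidableEq O] (h₀ : 0 ≤ ℒ u₀) (h₁ : 0 ≤ ℒ u₁)
    (hoT : oT ∈ C) (h₀T : 0 < ℒ u₀ oT) (h₁T : 0 < ℒ u₁ oT)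
    (hle : oh ∉ C → L0 ℒ C u₀ oh ≤ L0 ℒ C u₁ oh) :
    utilityGap ℒ C u₀ u₁ oT ≤ utilityGap ℒ (insert oh C) u₀ u₁ oT := by
  by_cases hoh : oh ∈ C
  · rw [insert_eq_of_mem hoh]
  · rw [utilityGap_insert h₀ h₁ hoT h₀T h₁T hoh, le_add_iff_nonneg_right, sub_nonneg]
    have hr : 0 ≤ L0 ℒ C u₀ oh := L0_nonneg h₀
    exact log_le_log (by positivity) (by gcongr; exact hle hoh)

theorem utilityGap_lt_utilityGap_insert [DecidableEq O] (h₀ : 0 ≤ ℒ u₀) (h₁ : 0 ≤ ℒ u₁)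
    (hoT : oT ∈ C) (h₀T : 0 < ℒ u₀ oT) (h₁T : 0 < ℒ u₁ oT) (hoh : oh ∉ C)
    (hlt : L0 ℒ C u₀ oh < L0 ℒ C u₁ oh) :
    utilityGap ℒ C u₀ u₁ oT < utilityGap ℒ (insert oh C) u₀ u₁ oT := by
  rw [utilityGap_insert h₀ h₁ hoT h₀T h₁T hoh, lt_add_iff_pos_right, sub_pos]
  have hr : 0 ≤ L0 ℒ C u₀ oh := L0_nonneg h₀
  exact log_lt_log (by positivity) (by gcongr)

theorem semantics_nonneg (hL : ∀ o, ℒ u o = 0 ∨ ℒ u o = 1) : 0 ≤ ℒ u := fun o ↦ by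
  rcases hL o with h | h <;> simp [h]

theorem L0_eq_zero_of_extension_eq_singleton (hL : ∀ o, ℒ u o = 0 ∨ ℒ u o = 1)
    (hext : {o : O | ℒ u o = 1} = {oT}) (ho : o ≠ oT) : L0 ℒ C u o = 0 := by
  have hu : ℒ u o ≠ 1 := fun h ↦ ho (hext.subset h)
  rw [L0, (hL o).resolve_right hu, zero_div]

end Listener

/- For `oh ∉ C` the value `L0 ℒ C u oh` is not a probability: it is the weight of `oh` relative to
the total weight of `C`, and may exceed `1`. -/
theorem asym_favors_unique_description_general
    {O 𝒰 : Type*} [DecidableEq O] {ℒ : 𝒰 → O → ℝ} {u₀ u₁ : 𝒰} {oT : O} {C H : Finset O}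
    (h₀ : 0 ≤ ℒ u₀) (h₁ : 0 ≤ ℒ u₁) (hoT : oT ∈ C) (h₀T : 0 < ℒ u₀ oT) (h₁T : 0 < ℒ u₁ oT)
    {P : O → ℝ} (hP : ∀ oh ∈ H, 0 ≤ P oh) (hPsum : ∑ oh ∈ H, P oh = 1)
    (hle : ∀ oh ∈ H, oh ∉ C → L0 ℒ C u₀ oh ≤ L0 ℒ C u₁ oh)
    (hstar : ∃ os ∈ H, os ∉ C ∧ L0 ℒ C u₀ os < L0 ℒ C u₁ os ∧ 0 < P os) :
    utilityGap ℒ C u₀ u₁ oT < ∑ oh ∈ H, P oh * utilityGap ℒ (insert oh C) u₀ u₁ oT := by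
  obtain ⟨os, hosH, hosC, hlt, hPos⟩ := hstar
  exact lt_sum_mul_of_le_of_lt hP hPsum
    (fun oh hoh ↦ utilityGap_le_utilityGap_insert h₀ h₁ hoT h₀T h₁T (hle oh hoh))
    ⟨os, hosH, hPos, utilityGap_lt_utilityGap_insert h₀ h₁ hoT h₀T h₁T hosC hlt⟩

/-- Corollary for a uniquely identifying description. -/
theorem asym_favors_unique_description
    {O 𝒰 : Type*} [DecidableEq O] [Fintype O]
    (ℒ : 𝒰 → O → ℝ) (hL : ∀ u o, ℒ u o = 0 ∨ ℒ u o = 1)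
    (u₀ u₁ : 𝒰) (oT : O)
    (huniq : {o : O | ℒ u₀ o = 1} = {oT})
    (hspec : {o : O | ℒ u₀ o = 1} ⊂ {o : O | ℒ u₁ o = 1})
    (C : Finset O) (hoT : oT ∈ C) (h1 : ℒ u₁ oT = 1)
    (P : O → ℝ) (hP : ∀ o, 0 ≤ P o) (hPsum : ∑ o : O, P o = 1)
    (hstar : ∃ os, os ∉ C ∧ ℒ u₁ os = 1 ∧ 0 < P os) :
    (∑ oh : O, P oh *
        (Real.log (L0 ℒ (insert oh C) u₀ oT) - Real.log (L0 ℒ (insert oh C) u₁ oT))) >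
      Real.log (L0 ℒ C u₀ oT) - Real.log (L0 ℒ C u₁ oT) := by
  have h₁ : 0 ≤ ℒ u₁ := semantics_nonneg (hL u₁)
  have h₀T : ℒ u₀ oT = 1 := huniq.superset rfl
  have h₁T : 0 < ℒ u₁ oT := h1 ▸ one_pos
  have hhidden : ∀ oh ∉ C, L0 ℒ C u₀ oh = 0 := fun oh hoh ↦
    L0_eq_zero_of_extension_eq_singleton (hL u₀) huniq (ne_of_mem_of_not_mem hoT hoh).symm
  obtain ⟨os, hosC, hos, hPos⟩ := hstar
  exact asym_favors_unique_description_general (semantics_nonneg (hL u₀)) h₁ hoT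
    (h₀T ▸ one_pos) h₁T (fun oh _ ↦ hP oh) hPsum
    (fun oh _ hoh ↦ (hhidden oh hoh).trans_le (L0_nonneg h₁))
    ⟨os, mem_univ os, hosC, (hhidden os hosC).trans_lt (L0_pos_s13 h₁ hoT h₁T (hos ▸ one_pos)), hPos⟩

end
end
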